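/- Let K = ℚ(θ) where θ is a root of the irreducible polynomial F(x) = x^7 + a x^5 + b with a ≡ 3 (mod 8) and b ≡ 4 (mod 8). Then 2 divides the index (A_K : ℤ[η]) for every η ∈ A_K generating K, and hence K is not monogenic. -/

import Mathlib

open NumberField Polynomial

/-!
Three distinct ring homomorphisms `𝓞 K → 𝔽₂` suffice: two of them agree at any given `η`, hence on
`ℤ[η]`, which therefore lies in the index-two kernel of their difference.

Two of the homomorphisms come from Hensel's lemma. The congruences on `a` and `b` give `8 ∣ F(±1)`
and `F'(±1) ≡ 2 (mod 4)`, so `F` has roots in `ℤ₂` congruent to `1` and to `-1` modulo `4`. These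
define distinct maps `𝓞 K → ℤ₂`, and distinct maps from a Dedekind domain to `ℤ₂` stay distinct
modulo `2`.

The third sends `θ` to `0`. A prime `P` containing `2` and `θ` satisfies `5 v(θ) = 2 v(2)` because
`θ⁵ (θ² + a) = -b`, so `P²` divides `θ`; since `|N(θ)| = |b|` is not divisible by `16`, the residue
field of `P` is `𝔽₂`.
-/

section Index

variable {R : Type*} [CommRing R] {p : ℕ} [Fact p.Prime]

lemma prime_dvd_index_adjoin_of_eqOn {f g : R →+* ZMod p} (hfg : f ≠ g) {s : Set R}
    (hs : s.EqOn f g) : p ∣ (Algebra.adjoin ℤ s).toSubring.toAddSubgroup.index := by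
  let d : R →+ ZMod p := f.toAddMonoidHom - g.toAddMonoidHom
  have adjoin_le_ker : (Algebra.adjoin ℤ s).toSubring.toAddSubgroup ≤ d.ker := fun x hx ↦
    sub_eq_zero.2 <| (AlgHom.adjoin_le_equalizer f.toIntAlgHom g.toIntAlgHom hs) hx
  have index_ker_ne_one : d.ker.index ≠ 1 := fun h ↦
    hfg <| RingHom.ext fun x ↦ sub_eq_zero.1 <| by
      simpa [d] using (AddSubgroup.index_eq_one.1 h).ge (AddSubgroup.mem_top x)
  have index_ker_dvd : d.ker.index ∣ p := by
    rw [AddSubgroup.index_ker]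
    simpa using AddSubgroup.card_addSubgroup_dvd_card d.range
  rw [← ((Nat.dvd_prime Fact.out).1 index_ker_dvd).resolve_left index_ker_ne_one]
  exact AddSubgroup.index_dvd_of_le adjoin_le_ker

lemma prime_dvd_index_adjoin_singleton_of_lt_card (S : Finset (R →+* ZMod p)) (hS : p < S.card)
    (η : R) : p ∣ (Algebra.adjoin ℤ {η}).toSubring.toAddSubgroup.index := by
  obtain ⟨f, -, g, -, hfg, hη⟩ :=
    Finset.exists_ne_map_eq_of_card_lt_of_maps_to (s := S) (t := Finset.univ)
      (f := fun f ↦ f η) (by simpa [ZMod.card] using hS) (fun _ _ ↦ Finset.mem_univ _)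
  exact prime_dvd_index_adjoin_of_eqOn hfg (Set.eqOn_singleton.2 hη)

end Index

section Padic

variable {p : ℕ} [Fact p.Prime]

lemma toZMod_eq_zero_iff_dvd {x : ℤ_[p]} : PadicInt.toZMod x = 0 ↔ (p : ℤ_[p]) ∣ x := by
  rw [← RingHom.mem_ker, PadicInt.ker_toZMod, PadicInt.maximalIdeal_eq_span_p,
    Ideal.mem_span_singleton]

lemma pow_dvd_iff_norm_le {x : ℤ_[p]} {n : ℕ} :
    (p : ℤ_[p]) ^ n ∣ x ↔ ‖x‖ ≤ (p : ℝ) ^ (-n : ℤ) := by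
  rw [PadicInt.norm_le_pow_iff_mem_span_pow, Ideal.mem_span_singleton]

lemma pow_succ_dvd_iff_norm_lt {x : ℤ_[p]} {n : ℕ} :
    (p : ℤ_[p]) ^ (n + 1) ∣ x ↔ ‖x‖ < (p : ℝ) ^ (-n : ℤ) := by
  rw [pow_dvd_iff_norm_le, PadicInt.norm_lt_pow_iff_norm_le_pow_sub_one]
  push_cast
  rw [neg_add']

lemma exists_aeval_eq_zero_and_pow_dvd_sub {R : Type*} [CommSemiring R] [Algebra R ℤ_[p]]
    {F : R[X]} {s : ℤ_[p]} {k : ℕ} (hF : (p : ℤ_[p]) ^ (2 * k + 1) ∣ aeval s F)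
    (hF' : (p : ℤ_[p]) ^ k ∣ aeval s F.derivative)
    (hF'_succ : ¬ (p : ℤ_[p]) ^ (k + 1) ∣ aeval s F.derivative) :
    ∃ z : ℤ_[p], aeval z F = 0 ∧ (p : ℤ_[p]) ^ (k + 1) ∣ z - s := by
  have norm_derivative : ‖aeval s F.derivative‖ = (p : ℝ) ^ (-k : ℤ) :=
    le_antisymm (pow_dvd_iff_norm_le.1 hF') (not_lt.1 (mt pow_succ_dvd_iff_norm_lt.2 hF'_succ))
  have norm_lt : ‖aeval s F‖ < ‖aeval s F.derivative‖ ^ 2 := by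
    have := pow_succ_dvd_iff_norm_lt.1 hF
    rwa [norm_derivative, ← zpow_natCast, ← zpow_mul, show (-k : ℤ) * (2 : ℕ) = -(2 * k : ℕ) by
      push_cast; ring]
  obtain ⟨z, hz, hzs, -⟩ := hensels_lemma norm_lt
  exact ⟨z, hz, pow_succ_dvd_iff_norm_lt.2 (norm_derivative ▸ hzs)⟩

lemma exists_eq_intCast_add_mul_add_mem_ker_sq {R : Type*} [CommRing R] [IsDedekindDomain R]
    (f : R →+* ℤ_[p]) (x : R) :
    ∃ (n : ℤ) (r : R), ∃ e ∈ RingHom.ker (PadicInt.toZMod.comp f) ^ 2, x = n + p * r + e := by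
  set P : Ideal R := RingHom.ker (PadicInt.toZMod.comp f)
  have mem_P {y : R} : y ∈ P ↔ (p : ℤ_[p]) ∣ f y := toZMod_eq_zero_iff_dvd
  have p_mem : (p : R) ∈ P := mem_P.2 (by simp)
  have p_notMem_sq : (p : R) ∉ P ^ 2 := fun h ↦ by
    have map_le : P.map f ≤ Ideal.span {(p : ℤ_[p])} :=
      Ideal.map_le_iff_le_comap.2 fun y hy ↦ Ideal.mem_span_singleton.2 (mem_P.1 hy)
    have sq_dvd : (p : ℤ_[p]) ^ 2 ∣ (p : ℤ_[p]) ^ 1 := by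
      have := Ideal.pow_right_mono map_le 2 (Ideal.map_pow f P 2 ▸ Ideal.mem_map_of_mem f h)
      simpa [Ideal.span_singleton_pow, Ideal.mem_span_singleton] using this
    rw [pow_dvd_pow_iff PadicInt.prime_p.ne_zero PadicInt.prime_p.not_isUnit] at sq_dvd
    omega
  have P_isPrime : P.IsPrime := RingHom.ker_isPrime _
  have P_ne_bot : P ≠ ⊥ := fun h ↦
    p_notMem_sq ((Ideal.mem_bot.1 (h ▸ p_mem)) ▸ zero_mem _)
  obtain ⟨n, hn⟩ := ZMod.intCast_surjective (PadicInt.toZMod (f x))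
  have sub_mem : x - n ∈ P := by
    simp [P, RingHom.mem_ker, hn]
  obtain ⟨r, e, he, hre⟩ := Ideal.exists_mul_add_mem_pow_succ P_ne_bot (i := 1) (p : R) (x - n)
    (by simpa using p_mem) p_notMem_sq (by simpa using sub_mem)
  exact ⟨n, r, e, he, by linear_combination -hre⟩

/- For the kernel `P` of the common reduction, `R = ℤ + pR + P ^ 2`. Agreement modulo `p ^ n` thus
improves to agreement modulo `p ^ (n + 1)`: on `P ^ 2` this is the Leibniz-type identity below. -/
theorem toZMod_comp_injective {R : Type*} [CommRing R] [IsDedekindDomain R] :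
    Function.Injective fun f : R →+* ℤ_[p] ↦ (PadicInt.toZMod (p := p)).comp f := by
  intro f g (hfg : PadicInt.toZMod.comp f = PadicInt.toZMod.comp g)
  set P : Ideal R := RingHom.ker (PadicInt.toZMod.comp f) with hP
  have dvd_left {x : R} (hx : x ∈ P) : (p : ℤ_[p]) ∣ f x := toZMod_eq_zero_iff_dvd.1 hx
  have dvd_right {x : R} (hx : x ∈ P) : (p : ℤ_[p]) ∣ g x :=
    toZMod_eq_zero_iff_dvd.1 (hfg ▸ hP ▸ hx :)
  have pow_dvd_sub (n : ℕ) (x : R) : (p : ℤ_[p]) ^ n ∣ f x - g x := by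
    induction n generalizing x with
    | zero => simp
    | succ n ih =>
      have dvd_of_mem_sq {e : R} (he : e ∈ P ^ 2) : (p : ℤ_[p]) ^ (n + 1) ∣ f e - g e := by
        rw [pow_two] at he
        refine Submodule.mul_induction_on he (fun x hx y hy ↦ ?_) fun x y hx hy ↦ ?_
        · have leibniz : f (x * y) - g (x * y) = f x * (f y - g y) + g y * (f x - g x) := by
            simp only [map_mul]; ring
          rw [leibniz, pow_succ']
          exact dvd_add (mul_dvd_mul (dvd_left hx) (ih y)) (mul_dvd_mul (dvd_right hy) (ih x))
        · rw [map_add, map_add, add_sub_add_comm]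
          exact dvd_add hx hy
      obtain ⟨m, r, e, he, rfl⟩ := exists_eq_intCast_add_mul_add_mem_ker_sq f x
      have decomposition : f (m + p * r + e) - g (m + p * r + e) =
          p * (f r - g r) + (f e - g e) := by
        simp only [map_add, map_mul, map_intCast, map_natCast]; ring
      rw [decomposition]
      exact dvd_add (pow_succ' (p : ℤ_[p]) n ▸ mul_dvd_mul_left _ (ih r)) (dvd_of_mem_sq he)
  refine PadicInt.toZModPow_eq_iff_ext.1 fun n ↦ RingHom.ext fun x ↦ ?_
  rw [← sub_eq_zero]
  simpa [← map_sub, ← RingHom.mem_ker, PadicInt.ker_toZModPow, Ideal.mem_span_singleton]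
    using pow_dvd_sub n x

lemma exists_ringHom_padicInt_coe_eq {R : Type*} [CommRing R] [Algebra.IsIntegral ℤ R]
    (φ : R →+* ℚ_[p]) : ∃ f : R →+* ℤ_[p], ∀ x, (f x : ℚ_[p]) = φ x := by
  have mem_subring (x : R) : φ x ∈ PadicInt.subring p := by
    have integral : IsIntegral ℤ_[p] (φ x) :=
      ((Algebra.IsIntegral.isIntegral (R := ℤ) x).map φ.toIntAlgHom).tower_top
    obtain ⟨y, hy⟩ := IsIntegrallyClosed.isIntegral_iff.1 integral
    exact hy ▸ y.2
  exact ⟨φ.codRestrict (PadicInt.subring p) mem_subring, fun _ ↦ rfl⟩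

end Padic

section PrimeIdeal

lemma mem_pow_of_pow_mul_eq_pow_mul {R : Type*} [CommRing R] [IsDedekindDomain R] {P : Ideal R}
    [P.IsPrime] {x y u w : R} {m n : ℕ} (hmn : n.Coprime m) (hx : x ∈ P) (hu : u ∉ P)
    (hw : w ∉ P) (h : x ^ m * u = y ^ n * w) : x ∈ P ^ n := by
  rcases eq_or_ne x 0 with rfl | hx0
  · exact zero_mem _
  rcases eq_or_ne n 0 with rfl | hn0
  · simp
  have prime_P : Prime P :=
    (Ideal.prime_iff_isPrime (Submodule.ne_bot_iff P |>.2 ⟨x, hx, hx0⟩)).2 inferInstance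
  have hy0 : y ≠ 0 := by
    rintro rfl
    have hu0 : u ≠ 0 := fun h0 ↦ hu (h0 ▸ P.zero_mem)
    exact mul_ne_zero (pow_ne_zero m hx0) hu0 (by rw [h, zero_pow hn0, zero_mul])
  have emultiplicity_eq_zero_of_notMem {v : R} (hv : v ∉ P) :
      emultiplicity P (Ideal.span {v}) = 0 :=
    emultiplicity_eq_zero.2 fun hdvd ↦ hv (Ideal.dvd_span_singleton.1 hdvd)
  have finite_x : FiniteMultiplicity P (Ideal.span {x}) :=
    .of_prime_left prime_P (by simpa using hx0)
  have finite_y : FiniteMultiplicity P (Ideal.span {y}) :=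
    .of_prime_left prime_P (by simpa using hy0)
  have multiplicity_eq :
      m * multiplicity P (Ideal.span {x}) = n * multiplicity P (Ideal.span {y}) := by
    have := congrArg (fun z ↦ emultiplicity P (Ideal.span {z})) h
    simp only [← Ideal.span_singleton_mul_span_singleton, ← Ideal.span_singleton_pow,
      emultiplicity_mul prime_P, emultiplicity_pow prime_P,
      emultiplicity_eq_zero_of_notMem hu, emultiplicity_eq_zero_of_notMem hw, add_zero,
      finite_x.emultiplicity_eq_multiplicity, finite_y.emultiplicity_eq_multiplicity] at this
    exact_mod_cast this
  have multiplicity_pos : 0 < multiplicity P (Ideal.span {x}) :=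
    multiplicity_pos_of_dvd (Ideal.dvd_span_singleton.2 hx)
  rw [← Ideal.dvd_span_singleton, finite_x.pow_dvd_iff_le_multiplicity]
  exact Nat.le_of_dvd multiplicity_pos (hmn.dvd_of_dvd_mul_left ⟨_, multiplicity_eq⟩)

lemma absNorm_eq_prime_of_mem_pow {R : Type*} [CommRing R] [IsDedekindDomain R] [Module.Free ℤ R]
    [Module.Finite ℤ R] {p : ℕ} (hp : p.Prime) {P : Ideal R} [P.IsPrime]
    [P.LiesOver (Ideal.span {(p : ℤ)})] {x : R} {k : ℕ} (hx : x ∈ P ^ k)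
    (hnorm : ¬ p ^ (2 * k) ∣ Ideal.absNorm (Ideal.span {x})) :
    Ideal.absNorm P = p := by
  have absNorm_eq := Ideal.absNorm_eq_pow_inertiaDeg' P hp
  set d := (Ideal.span {(p : ℤ)}).inertiaDeg' P
  have pos : 0 < d := Ideal.inertiaDeg'_pos' _ _
  have lt_two : d < 2 := by
    by_contra! hd
    refine hnorm ((pow_dvd_pow p (Nat.mul_le_mul_right k hd)).trans ?_)
    rw [pow_mul, ← absNorm_eq, ← map_pow]
    exact Ideal.absNorm_dvd_absNorm_of_le ((Ideal.span_singleton_le_iff_mem _).2 hx)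
  rw [absNorm_eq, show d = 1 by omega, pow_one]

lemma exists_ringHom_zmod_ker_eq {R : Type*} [CommRing R] {P : Ideal R} {p : ℕ} (hp : p.Prime)
    (hP : Nat.card (R ⧸ P) = p) : ∃ f : R →+* ZMod p, RingHom.ker f = P := by
  have : Finite (R ⧸ P) := Nat.finite_of_card_ne_zero (hP ▸ hp.ne_zero)
  have := Fintype.ofFinite (R ⧸ P)
  let e := ZMod.ringEquivOfPrime (R ⧸ P) hp (by rw [← Nat.card_eq_fintype_card, hP])
  refine ⟨e.symm.toRingHom.comp (Ideal.Quotient.mk P), ?_⟩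
  rw [RingHom.ker_equiv_comp, Ideal.mk_ker]

end PrimeIdeal

section RingOfIntegers

lemma minpoly_eq_of_monic_of_irreducible {R S : Type*} [CommRing R] [IsDomain R]
    [IsIntegrallyClosed R] [CommRing S] [IsDomain S] [Algebra R S] [Module.IsTorsionFree R S]
    {F : R[X]} (hF : F.Monic) (hirr : Irreducible F) {s : S} (hs : aeval s F = 0) :
    minpoly R s = F := by
  have integral : IsIntegral R s := ⟨F, hF, hs⟩
  have associated : Associated (minpoly R s) F :=
    (minpoly.irreducible integral).associated_of_dvd hirr
      (minpoly.isIntegrallyClosed_dvd integral hs)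
  exact eq_of_monic_of_associated (minpoly.monic integral) hF associated

variable {K : Type*} [Field K] [CharZero K]

lemma exists_ringOfIntegers_minpoly_eq {F : ℤ[X]} (hF : F.Monic) (hirr : Irreducible F) {θ : K}
    (hθ : aeval θ F = 0) : ∃ t : 𝓞 K, (t : K) = θ ∧ minpoly ℤ t = F := by
  obtain ⟨t, rfl⟩ : ∃ t : 𝓞 K, (t : K) = θ := ⟨⟨θ, F, hF, hθ⟩, rfl⟩
  rw [aeval_algebraMap_eq_zero_iff] at hθ
  exact ⟨t, rfl, minpoly_eq_of_monic_of_irreducible hF hirr hθ⟩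

lemma minpoly_rat_coe_eq_map (t : 𝓞 K) :
    minpoly ℚ (t : K) = (minpoly ℤ t).map (algebraMap ℤ ℚ) :=
  minpoly.isIntegrallyClosed_eq_field_fractions ℚ K (Algebra.IsIntegral.isIntegral t)

lemma exists_ringHom_padicInt_map_eq {t : 𝓞 K} (hgen : Algebra.adjoin ℚ {(t : K)} = ⊤)
    {p : ℕ} [Fact p.Prime] {z : ℤ_[p]} (hz : aeval z (minpoly ℤ t) = 0) :
    ∃ f : 𝓞 K →+* ℤ_[p], f t = z := by
  let pb := PowerBasis.ofAdjoinEqTop (RingOfIntegers.isIntegral_coe t).tower_top hgen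
  have pb_gen : pb.gen = t := PowerBasis.ofAdjoinEqTop_gen _ hgen
  have root : aeval (z : ℚ_[p]) (minpoly ℚ pb.gen) = 0 := by
    rw [pb_gen, minpoly_rat_coe_eq_map, aeval_map_algebraMap]
    have := aeval_algebraMap_apply ℚ_[p] z (minpoly ℤ t)
    rwa [hz, map_zero] at this
  obtain ⟨f, hf⟩ := exists_ringHom_padicInt_coe_eq
    ((pb.lift (z : ℚ_[p]) root : K →+* ℚ_[p]).comp (algebraMap (𝓞 K) K))
  refine ⟨f, Subtype.ext ?_⟩
  have := pb.lift_gen (z : ℚ_[p]) root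
  rw [pb_gen] at this
  exact (hf t).trans this

lemma absNorm_span_singleton_eq_natAbs_coeff_zero_minpoly {K : Type*} [Field K]
    [NumberField K] {t : 𝓞 K} (hgen : Algebra.adjoin ℚ {(t : K)} = ⊤) :
    Ideal.absNorm (Ideal.span {t}) = ((minpoly ℤ t).coeff 0).natAbs := by
  let pb := PowerBasis.ofAdjoinEqTop (RingOfIntegers.isIntegral_coe t).tower_top hgen
  have pb_gen : pb.gen = t := PowerBasis.ofAdjoinEqTop_gen _ hgen
  have norm_eq : Algebra.norm ℤ t = (-1) ^ pb.dim * (minpoly ℤ t).coeff 0 := by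
    have := Algebra.PowerBasis.norm_gen_eq_coeff_zero_minpoly pb
    rw [pb_gen, minpoly_rat_coe_eq_map, coeff_map, ← Algebra.coe_norm_int,
      algebraMap_int_eq, eq_intCast] at this
    exact_mod_cast this
  simp [Ideal.absNorm_span_singleton, norm_eq, Int.natAbs_mul, Int.natAbs_pow]

end RingOfIntegers

section Septic

/-- The trinomial `F(x) = x ^ 7 + a x ^ 5 + b`, taken over `ℤ` so that it can be evaluated both in
rings of integers and in `ℤ_[2]`. -/
noncomputable def septicTrinomial (a b : ℤ) : ℤ[X] := X ^ 7 + C a * X ^ 5 + C b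

variable {a b : ℤ}

lemma septicTrinomial_monic : (septicTrinomial a b).Monic := by
  unfold septicTrinomial
  monicity!

lemma aeval_septicTrinomial {A : Type*} [CommRing A] (x : A) :
    aeval x (septicTrinomial a b) = x ^ 7 + a * x ^ 5 + b := by
  simp [septicTrinomial]

lemma aeval_derivative_septicTrinomial {A : Type*} [CommRing A] (x : A) :
    aeval x (septicTrinomial a b).derivative = 7 * x ^ 6 + a * (5 * x ^ 4) := by
  simp [septicTrinomial, map_ofNat]

lemma exists_aeval_septicTrinomial_eq_zero_and_sq_dvd_sub (ha : a ≡ 3 [ZMOD 8])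
    (hb : b ≡ 4 [ZMOD 8]) {s : ℤ} (hs : IsUnit s) :
    ∃ z : ℤ_[2], aeval z (septicTrinomial a b) = 0 ∧ (2 : ℤ_[2]) ^ 2 ∣ z - s := by
  rw [Int.isUnit_iff] at hs
  have eval_eq : aeval (s : ℤ_[2]) (septicTrinomial a b) = (s * (1 + a) + b : ℤ) := by
    rcases hs with rfl | rfl <;> rw [aeval_septicTrinomial] <;> push_cast <;> ring
  have derivative_eq :
      aeval (s : ℤ_[2]) (septicTrinomial a b).derivative = (7 + 5 * a : ℤ) := by
    rcases hs with rfl | rfl <;> rw [aeval_derivative_septicTrinomial] <;> push_cast <;> ring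
  rw [Int.ModEq] at ha hb
  refine exists_aeval_eq_zero_and_pow_dvd_sub (p := 2) (k := 1) ?_ ?_ ?_
  · rw [eval_eq, PadicInt.pow_p_dvd_int_iff]
    rcases hs with rfl | rfl <;> norm_num <;> omega
  · rw [derivative_eq, PadicInt.pow_p_dvd_int_iff]
    norm_num
    omega
  · rw [derivative_eq, PadicInt.pow_p_dvd_int_iff]
    norm_num
    omega

variable {K : Type*} [Field K] [NumberField K] {t : 𝓞 K}

theorem exists_ringHom_zmod_two_map_root_eq_zero (ha : a ≡ 3 [ZMOD 8]) (hb : b ≡ 4 [ZMOD 8])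
    (hmin : minpoly ℤ t = septicTrinomial a b) (hgen : Algebra.adjoin ℚ {(t : K)} = ⊤) :
    ∃ f : 𝓞 K →+* ZMod 2, f t = 0 := by
  have absNorm_t : Ideal.absNorm (Ideal.span {t}) = b.natAbs := by
    rw [absNorm_span_singleton_eq_natAbs_coeff_zero_minpoly hgen, hmin]
    simp [septicTrinomial]
  have root : t ^ 7 + a * t ^ 5 + b = 0 := by
    rw [← aeval_septicTrinomial, ← hmin, minpoly.aeval]
  rw [Int.ModEq] at ha hb
  obtain ⟨P, P_isMaximal, P_under, P_dvd⟩ := Ideal.exists_isMaximal_dvd_of_dvd_absNorm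
    Int.prime_two (Ideal.span {t}) (by omega)
  have P_liesOver : P.LiesOver (Ideal.span {(2 : ℤ)}) := ⟨P_under.symm⟩
  have intCast_mem_iff (m : ℤ) : (m : 𝓞 K) ∈ P ↔ 2 ∣ m := by
    rw [← Ideal.mem_span_singleton, ← P_under, Ideal.mem_comap, algebraMap_int_eq, eq_intCast]
  have t_mem : t ∈ P := Ideal.dvd_span_singleton.1 P_dvd
  have sq_add_notMem : t ^ 2 + (a : 𝓞 K) ∉ P := by
    rw [P.add_mem_iff_right (P.pow_mem_of_mem t_mem 2 two_pos), intCast_mem_iff]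
    omega
  obtain ⟨c, rfl⟩ : ∃ c, b = 4 * c := ⟨b / 4, by omega⟩
  have factored : t ^ 5 * (t ^ 2 + a) = 2 ^ 2 * ((-c : ℤ) : 𝓞 K) := by
    push_cast at root ⊢
    linear_combination root
  have t_mem_sq : t ∈ P ^ 2 := mem_pow_of_pow_mul_eq_pow_mul (by norm_num) t_mem sq_add_notMem
    (by rw [intCast_mem_iff]; omega) factored
  have absNorm_P : Ideal.absNorm P = 2 :=
    absNorm_eq_prime_of_mem_pow Nat.prime_two t_mem_sq (by omega)
  obtain ⟨f, hf⟩ := exists_ringHom_zmod_ker_eq Nat.prime_two absNorm_P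
  exact ⟨f, (hf ▸ t_mem :)⟩

theorem exists_pair_ringHom_zmod_two_map_root_eq_one (ha : a ≡ 3 [ZMOD 8]) (hb : b ≡ 4 [ZMOD 8])
    (hmin : minpoly ℤ t = septicTrinomial a b) (hgen : Algebra.adjoin ℚ {(t : K)} = ⊤) :
    ∃ f g : 𝓞 K →+* ZMod 2, f ≠ g ∧ f t = 1 ∧ g t = 1 := by
  obtain ⟨z, hz, hz1⟩ := exists_aeval_septicTrinomial_eq_zero_and_sq_dvd_sub ha hb isUnit_one
  obtain ⟨w, hw, hw1⟩ := exists_aeval_septicTrinomial_eq_zero_and_sq_dvd_sub ha hb isUnit_one.neg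
  obtain ⟨f, hf⟩ := exists_ringHom_padicInt_map_eq hgen (hmin ▸ hz)
  obtain ⟨g, hg⟩ := exists_ringHom_padicInt_map_eq hgen (hmin ▸ hw)
  have f_ne_g : f ≠ g := by
    rintro rfl
    have sq_dvd : ((2 : ℕ) : ℤ_[2]) ^ 2 ∣ ((-1 - 1 : ℤ) : ℤ_[2]) := by
      have sub_eq : ((-1 - 1 : ℤ) : ℤ_[2]) = (z - (1 : ℤ)) - (w - (-1 : ℤ)) := by
        rw [← hf, ← hg]; push_cast; ring
      exact sub_eq ▸ dvd_sub hz1 hw1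
    rw [PadicInt.pow_p_dvd_int_iff] at sq_dvd
    norm_num at sq_dvd
  have toZMod_eq {x : ℤ_[2]} {s : ℤ} (h : (2 : ℤ_[2]) ^ 2 ∣ x - s) : PadicInt.toZMod x = s := by
    rw [← sub_eq_zero, ← map_intCast PadicInt.toZMod, ← map_sub, toZMod_eq_zero_iff_dvd]
    exact (dvd_pow_self _ two_ne_zero).trans h
  refine ⟨PadicInt.toZMod.comp f, PadicInt.toZMod.comp g, toZMod_comp_injective.ne f_ne_g, ?_, ?_⟩
  · simpa [hf] using toZMod_eq hz1
  · simpa [hg] using toZMod_eq hw1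

end Septic

/-- If `K = ℚ(θ)` with `θ` a root of the irreducible trinomial `x^7 + a x^5 + b` where
`a ≡ 3 (mod 8)` and `b ≡ 4 (mod 8)`, then `2` divides the index `(A_K : ℤ[η])` of every
integral generator `η` of `K`; hence `K` is not monogenic. -/
theorem two_dvd_index_case_C9
    (a b : ℤ) (ha : a ≡ 3 [ZMOD 8]) (hb : b ≡ 4 [ZMOD 8])
    (hirr : Irreducible (X ^ 7 + C (a : ℚ) * X ^ 5 + C (b : ℚ)))
    (K : Type*) [Field K] [NumberField K] (θ : K)
    (hroot : θ ^ 7 + (a : K) * θ ^ 5 + (b : K) = 0)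
    (hgen : Algebra.adjoin ℚ {θ} = ⊤) :
    (∀ η : 𝓞 K, Algebra.adjoin ℚ {(η : K)} = ⊤ →
        2 ∣ (Algebra.adjoin ℤ {η}).toSubring.toAddSubgroup.index) ∧
      ¬ ∃ η : 𝓞 K, Algebra.adjoin ℤ {η} = ⊤ := by
  have irreducible : Irreducible (septicTrinomial a b) := by
    rw [septicTrinomial_monic.irreducible_iff_irreducible_map_fraction_map (K := ℚ)]
    simpa [septicTrinomial] using hirr
  obtain ⟨t, rfl, hmin⟩ := exists_ringOfIntegers_minpoly_eq septicTrinomial_monic irreducible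
    ((aeval_septicTrinomial θ).trans hroot)
  obtain ⟨f, g, hfg, hf, hg⟩ := exists_pair_ringHom_zmod_two_map_root_eq_one ha hb hmin hgen
  obtain ⟨h, hh⟩ := exists_ringHom_zmod_two_map_root_eq_zero ha hb hmin hgen
  have dvd_index (η : 𝓞 K) : 2 ∣ (Algebra.adjoin ℤ {η}).toSubring.toAddSubgroup.index := by
    classical
    refine prime_dvd_index_adjoin_singleton_of_lt_card {f, g, h} ?_ η
    rw [Finset.card_eq_three.2 ⟨f, g, h, hfg, ?_, ?_, rfl⟩]
    · norm_num
    · rintro rfl; simp [hf] at hh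
    · rintro rfl; simp [hg] at hh
  refine ⟨fun η _ ↦ dvd_index η, fun ⟨η, hη⟩ ↦ ?_⟩
  have index_eq_one : (Algebra.adjoin ℤ {η}).toSubring.toAddSubgroup.index = 1 := by
    rw [AddSubgroup.index_eq_one, hη]; rfl
  exact absurd (dvd_index η) (by rw [index_eq_one]; norm_num)
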